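/- arXiv:math/0402238 — 3 statements merged into one kernel-verified Lean document; each statement's English description precedes it below -/
import Mathlib

section
/- Let T > 0 and D > 0. For each i ∈ ℕ, let X_i be a nonempty set and for each t ∈ [0,T] let d_i(t) be a metric on X_i making (X_i, d_i(t)) a compact metric space. Assume: (a) diam(X_i, d_i(t)) ≤ D for all i and all t ∈ [0,T]; (b) for every ε > 0 there exists N(ε) ∈ ℕ such that every (X_i, d_i(0)) can be covered by N(ε) closed balls of radius ε; (c) for every δ > 0 there exists η > 0 such that whenever t₀, t₁ ∈ [0,T] satisfy |t₀ − t₁| < η, one has (1+δ)^{-1} d_i(t₀)(x,y) ≤ d_i(t₁)(x,y) ≤ (1+δ) d_i(t₀)(x,y) for all i and all x,y ∈ X_i. Then there exists a strictly increasing sequence of indices i_k and a one-parameter family of nonempty compact metric spaces (X(t), d(t)), t ∈ [0,T], such that for every t ∈ [0,T], the Gromov–Hausdorff distance between (X_{i_k}, d_{i_k}(t)) and (X(t), d(t)) tends to 0 as k → ∞. -/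
/-!
Call two metric spaces `L`-bilipschitz equivalent if a bijection between them changes distances by
a factor of at most `L`. The time slices are `2`-bilipschitz equivalent for nearby times, uniformly
in the index, and having a uniform bilipschitz constant is an equivalence relation on times; since
time is connected, every slice is comparable with the initial one. Hence Gromov's precompactness
criterion passes from the initial time to all times. A bijection with constant `L` close to `1`
moves a space of bounded diameter by a small Gromov–Hausdorff distance, so the curves of slices are
equicontinuous in the complete space `GHSpace`, and Arzelà–Ascoli yields the subsequence.
-/

/-- The point of Gromov–Hausdorff space associated to a nonempty compact metric space,
with the metric structure given explicitly. -/
noncomputable def ghPt (X : Type) (m : MetricSpace X)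
    (hc : @CompactSpace X m.toPseudoMetricSpace.toUniformSpace.toTopologicalSpace)
    (hn : Nonempty X) : GromovHausdorff.GHSpace :=
  @GromovHausdorff.toGHSpace X m hc hn

open Filter GromovHausdorff Metric Set Topology
open scoped NNReal

section ArzelaAscoli

variable {K α : Type*} [TopologicalSpace K] [UniformSpace α] [CompleteSpace α]

lemma isCompact_setOf_mem_closure_of_equicontinuous {A : Set (K → α)} (hA : A.Equicontinuous)
    (hbdd : ∀ t, TotallyBounded ((fun f ↦ f t) '' A)) :
    IsCompact {f : C(K, α) | ⇑f ∈ closure A} := by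
  have hcl : (closure A).Equicontinuous := hA.closure
  have hcpt : IsCompact (closure A) := by
    have hprod : IsCompact (univ.pi fun t ↦ closure ((fun f ↦ f t) '' A)) :=
      isCompact_univ_pi fun t ↦ (hbdd t).closure.isCompact_of_isClosed isClosed_closure
    refine hprod.of_isClosed_subset isClosed_closure (closure_minimal ?_ ?_)
    · exact fun f hf t _ ↦ subset_closure (mem_image_of_mem _ hf)
    · exact isClosed_set_pi fun _ _ ↦ isClosed_closure
  have himage : ContinuousMap.toFun '' {f : C(K, α) | ⇑f ∈ closure A} = closure A :=
    (image_subset_iff.2 fun _ hf ↦ hf).antisymm fun f hf ↦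
      ⟨⟨f, hcl.continuous_of_mem hf⟩, hf, rfl⟩
  exact ArzelaAscoli.isCompact_of_equicontinuous _ (himage.symm.subst hcpt)
    (hcl.comp fun f : {f : C(K, α) | ⇑f ∈ closure A} ↦ ⟨f, f.2⟩)

lemma exists_subseq_tendstoLocallyUniformly_of_equicontinuous [WeaklyLocallyCompactSpace K]
    [SigmaCompactSpace K] [(uniformity α).IsCountablyGenerated] {F : ℕ → K → α}
    (hF : Equicontinuous F) (hbdd : ∀ t, TotallyBounded (range fun n ↦ F n t)) :
    ∃ φ : ℕ → ℕ, StrictMono φ ∧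
      ∃ q : C(K, α), TendstoLocallyUniformly (fun n ↦ F (φ n)) q atTop := by
  have hcpt : IsCompact {f : C(K, α) | ⇑f ∈ closure (range F)} := by
    refine isCompact_setOf_mem_closure_of_equicontinuous (equicontinuous_iff_range.1 hF) fun t ↦ ?_
    simpa only [← range_comp, Function.comp_def] using hbdd t
  let G (n : ℕ) : C(K, α) := ⟨F n, hF.continuous n⟩
  obtain ⟨q, -, φ, hφ, hlim⟩ :=
    hcpt.tendsto_subseq (x := G) fun n ↦ subset_closure (mem_range_self n)
  exact ⟨φ, hφ, q, ContinuousMap.tendsto_iff_tendstoLocallyUniformly.1 hlim⟩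

end ArzelaAscoli

section UniformlyTotallyBounded

lemma coveringNumber_image_le_of_lipschitzWith {X Y : Type*} [PseudoEMetricSpace X]
    [PseudoEMetricSpace Y] {L : ℝ≥0} {f : X → Y} (hf : LipschitzWith L f) (ε : ℝ≥0) (A : Set X) :
    coveringNumber (L * ε) (f '' A) ≤ coveringNumber ε A := by
  refine le_iInf₂ fun C hCA ↦ le_iInf fun hC ↦ ?_
  exact ((hC.image_lipschitz hf).coveringNumber_le_encard (image_mono hCA)).trans
    (encard_image_le f C)

/-- Gromov's precompactness condition on a family of metric spaces: bounds on the diameters and on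
the covering numbers at each scale that do not depend on the member of the family. -/
structure UniformlyTotallyBounded {ι : Type*} (X : ι → Type*) [∀ i, PseudoEMetricSpace (X i)] :
    Prop where
  exists_ediam_le : ∃ D : ℝ≥0, ∀ i, ediam (univ : Set (X i)) ≤ D
  exists_coveringNumber_le : ∀ ε : ℝ≥0, 0 < ε →
    ∃ N : ℕ, ∀ i, coveringNumber ε (univ : Set (X i)) ≤ N

namespace UniformlyTotallyBounded

variable {ι : Type*}

lemma of_surjective_of_lipschitzWith {X Y : ι → Type*} [∀ i, PseudoEMetricSpace (X i)]
    [∀ i, PseudoEMetricSpace (Y i)] (hX : UniformlyTotallyBounded X) {L : ℝ≥0}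
    {f : ∀ i, X i → Y i} (hsurj : ∀ i, (f i).Surjective) (hf : ∀ i, LipschitzWith L (f i)) :
    UniformlyTotallyBounded Y where
  exists_ediam_le := by
    obtain ⟨D, hD⟩ := hX.exists_ediam_le
    refine ⟨L * D, fun i ↦ ?_⟩
    rw [← image_univ_of_surjective (hsurj i), ENNReal.coe_mul]
    exact ((hf i).ediam_image_le univ).trans (mul_le_mul_right (hD i) _)
  exists_coveringNumber_le ε hε := by
    have hL : 0 < L + 1 := by positivity
    obtain ⟨N, hN⟩ := hX.exists_coveringNumber_le (ε / (L + 1)) (div_pos hε hL)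
    refine ⟨N, fun i ↦ le_trans ?_ (hN i)⟩
    have := coveringNumber_image_le_of_lipschitzWith
      ((hf i).weaken (le_add_of_nonneg_right zero_le_one)) (ε / (L + 1)) univ
    rwa [image_univ_of_surjective (hsurj i), mul_div_cancel₀ _ hL.ne'] at this

lemma of_diam_le_of_closedBall {X : ι → Type*} [∀ i, PseudoMetricSpace (X i)]
    [∀ i, BoundedSpace (X i)] {D : ℝ} (hdiam : ∀ i, diam (univ : Set (X i)) ≤ D)
    (hcover : ∀ ε : ℝ, 0 < ε → ∃ N : ℕ, ∀ i, ∃ s : Finset (X i), s.card ≤ N ∧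
      (univ : Set (X i)) ⊆ ⋃ x ∈ s, closedBall x ε) :
    UniformlyTotallyBounded X where
  exists_ediam_le := by
    refine ⟨D.toNNReal, fun i ↦ ediam_le_of_forall_dist_le fun x _ y _ ↦ ?_⟩
    have := dist_le_diam_of_mem (Bornology.IsBounded.all univ) (mem_univ x) (mem_univ y)
    exact this.trans (hdiam i)
  exists_coveringNumber_le ε hε := by
    obtain ⟨N, hN⟩ := hcover ε hε
    refine ⟨N, fun i ↦ ?_⟩
    obtain ⟨s, hsN, hs⟩ := hN i
    calc coveringNumber ε (univ : Set (X i))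
        ≤ (s : Set (X i)).encard :=
          (IsCover.of_subset_iUnion_closedBall hs).coveringNumber_le_encard (subset_univ _)
      _ = s.card := encard_coe_eq_coe_finsetCard s
      _ ≤ N := by exact_mod_cast hsN

lemma totallyBounded_range {p : ι → GHSpace} (hp : UniformlyTotallyBounded fun i ↦ (p i).Rep) :
    TotallyBounded (range p) := by
  obtain ⟨D, hD⟩ := hp.exists_ediam_le
  obtain ⟨u, -, hu, hlim⟩ := exists_seq_strictAnti_tendsto (0 : ℝ≥0)
  choose N hN using fun n ↦ hp.exists_coveringNumber_le (u n / 2) (half_pos (hu n))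
  refine GromovHausdorff.totallyBounded (C := D) (K := N) (NNReal.tendsto_coe.2 hlim) ?_ ?_
  · rintro _ ⟨i, rfl⟩
    exact ENNReal.toReal_le_coe_of_le_coe (hD i)
  · rintro _ ⟨i, rfl⟩ n
    obtain ⟨s, -, -, hs, hcard⟩ :=
      exists_set_encard_eq_coveringNumber ((hN n i).trans_lt (ENat.natCast_lt_top _)).ne
    refine ⟨s, Cardinal.toENat_le_natCast.1 (hcard.trans_le (hN n i)), ?_⟩
    refine hs.subset_iUnion_closedBall.trans (iUnion₂_mono fun x _ ↦ closedBall_subset_ball ?_)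
    exact_mod_cast half_lt_self (hu n)

lemma totallyBounded_range_toGHSpace {X : ι → Type*} [∀ i, MetricSpace (X i)]
    [∀ i, CompactSpace (X i)] [∀ i, Nonempty (X i)] (hX : UniformlyTotallyBounded X) :
    TotallyBounded (range fun i ↦ toGHSpace (X i)) := by
  let e (i : ι) : (toGHSpace (X i)).Rep ≃ᵢ X i := Classical.choice
    (toGHSpace_eq_toGHSpace_iff_isometryEquiv.1 (toGHSpace (X i)).toGHSpace_rep)
  exact (hX.of_surjective_of_lipschitzWith (fun i ↦ (e i).symm.surjective)
    fun i ↦ (e i).symm.isometry.lipschitz).totallyBounded_range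

end UniformlyTotallyBounded

end UniformlyTotallyBounded

section BilipschitzEquivalent

lemma abs_dist_sub_dist_le_of_bilipschitz {X Y : Type*} [PseudoMetricSpace X] [PseudoMetricSpace Y]
    {L D : ℝ≥0} {f : X → Y} (hf : LipschitzWith L f) (hf' : AntilipschitzWith L f) (hL : 1 ≤ L)
    (hD : ediam (univ : Set X) ≤ D) (x y : X) :
    |dist x y - dist (f x) (f y)| ≤ (L - 1) * D := by
  have hL₁ : (1 : ℝ) ≤ L := hL
  have hxy : dist x y ≤ D :=
    dist_le_coe.2 (edist_le_coe.1 ((edist_le_ediam_of_mem (mem_univ x) (mem_univ y)).trans hD))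
  refine abs_sub_le_iff.2 ⟨?_, ?_⟩
  · calc dist x y - dist (f x) (f y)
        ≤ dist x y - dist x y / L := by
          gcongr
          exact (div_le_iff₀' (zero_lt_one.trans_le hL₁)).2 (hf'.le_mul_dist x y)
      _ = (L - 1) * (dist x y / L) := by field_simp
      _ ≤ (L - 1) * D :=
          mul_le_mul_of_nonneg_left ((div_le_self dist_nonneg hL₁).trans hxy) (sub_nonneg.2 hL₁)
  · calc dist (f x) (f y) - dist x y
        ≤ L * dist x y - dist x y := by
          gcongr
          exact hf.dist_le_mul x y
      _ = (L - 1) * dist x y := by ring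
      _ ≤ (L - 1) * D := mul_le_mul_of_nonneg_left hxy (sub_nonneg.2 hL₁)

/-- Closeness in the Lipschitz distance: some bijection changes distances by a factor of at most
`L` in either direction. It is how two time slices of a family of spaces are compared, with no
common underlying set required. -/
def BilipschitzEquivalent (L : ℝ≥0) (X Y : Type*) [PseudoEMetricSpace X] [PseudoEMetricSpace Y] :
    Prop :=
  ∃ e : X ≃ Y, LipschitzWith L e ∧ AntilipschitzWith L e

namespace BilipschitzEquivalent

variable {X Y Z : Type*} {L L' : ℝ≥0}

section PseudoEMetricSpace

variable [PseudoEMetricSpace X] [PseudoEMetricSpace Y] [PseudoEMetricSpace Z]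

protected lemma symm : BilipschitzEquivalent L X Y → BilipschitzEquivalent L Y X
  | ⟨e, he, he'⟩ =>
    ⟨e.symm, he'.to_rightInverse e.right_inv, he.to_rightInverse e.right_inv⟩

protected lemma trans :
    BilipschitzEquivalent L X Y → BilipschitzEquivalent L' Y Z → BilipschitzEquivalent (L' * L) X Z
  | ⟨e, he, he'⟩, ⟨f, hf, hf'⟩ =>
    ⟨e.trans f, hf.comp he, mul_comm L L' ▸ hf'.comp he'⟩

end PseudoEMetricSpace

variable [MetricSpace X] [CompactSpace X] [Nonempty X] [MetricSpace Y] [CompactSpace Y] [Nonempty Y]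

lemma ghDist_le (h : BilipschitzEquivalent L X Y) (hL : 1 ≤ L) {D : ℝ≥0}
    (hD : ediam (univ : Set X) ≤ D) : ghDist X Y ≤ (L - 1) * D / 2 := by
  obtain ⟨e, he, he'⟩ := h
  simpa only [zero_add, add_zero] using ghDist_le_of_approx_subsets (s := univ) (ε₁ := 0) (ε₃ := 0)
    (fun x ↦ e x) (fun x ↦ ⟨x, mem_univ x, (dist_self x).le⟩)
    (fun y ↦ ⟨⟨e.symm y, mem_univ _⟩, by simp only [e.apply_symm_apply, dist_self, le_refl]⟩)
    fun x y ↦ abs_dist_sub_dist_le_of_bilipschitz he he' hL hD x y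

end BilipschitzEquivalent

variable {ι K : Type*} [TopologicalSpace K] {X : ι → K → Type*}

lemma exists_forall_bilipschitzEquivalent [PreconnectedSpace K]
    [∀ i t, PseudoEMetricSpace (X i t)]
    (h : ∀ s, ∃ L, ∀ᶠ t in 𝓝 s, ∀ i, BilipschitzEquivalent L (X i s) (X i t)) (s t : K) :
    ∃ L, ∀ i, BilipschitzEquivalent L (X i s) (X i t) := by
  let R (s t : K) : Prop := ∃ L, ∀ i, BilipschitzEquivalent L (X i s) (X i t)
  have : Std.Symm R := ⟨fun _ _ ⟨L, hL⟩ ↦ ⟨L, fun i ↦ (hL i).symm⟩⟩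
  refine PreconnectedSpace.induction₂ R (fun s ↦ ?_)
    ⟨fun _ _ _ ⟨L, hL⟩ ⟨L', hL'⟩ ↦ ⟨L' * L, fun i ↦ (hL i).trans (hL' i)⟩⟩ s t
  obtain ⟨L, hL⟩ := h s
  exact hL.mono fun _ ht ↦ ⟨L, ht⟩

lemma equicontinuousAt_toGHSpace [∀ i t, MetricSpace (X i t)] [∀ i t, CompactSpace (X i t)]
    [∀ i t, Nonempty (X i t)] {s : K} {D : ℝ≥0} (hD : ∀ i, ediam (univ : Set (X i s)) ≤ D)
    (h : ∀ L : ℝ≥0, 1 < L → ∀ᶠ t in 𝓝 s, ∀ i, BilipschitzEquivalent L (X i s) (X i t)) :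
    EquicontinuousAt (fun i t ↦ toGHSpace (X i t)) s := by
  refine Metric.equicontinuousAt_iff_right.2 fun ε hε ↦ ?_
  lift ε to ℝ≥0 using hε.le
  have hδ : 0 < ε / (D + 1) := div_pos hε (by positivity)
  filter_upwards [h (1 + ε / (D + 1)) (lt_add_of_pos_right 1 hδ)] with t ht i
  calc ghDist (X i s) (X i t)
      ≤ (((1 + ε / (D + 1) : ℝ≥0) : ℝ) - 1) * D / 2 := (ht i).ghDist_le le_self_add (hD i)
    _ = (D / (D + 1)) * (ε / 2) := by push_cast; ring
    _ ≤ 1 * (ε / 2) := by gcongr; exact div_le_one_of_le₀ (by linarith) (by positivity)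
    _ < ε := by rw [one_mul]; exact half_lt_self hε

end BilipschitzEquivalent

theorem glickenstein_compactness_general {K : Type*} [TopologicalSpace K] [PreconnectedSpace K]
    [WeaklyLocallyCompactSpace K] [SigmaCompactSpace K] {X : ℕ → K → Type*}
    [∀ i t, MetricSpace (X i t)] [∀ i t, CompactSpace (X i t)] [∀ i t, Nonempty (X i t)]
    (t₀ : K) (hinit : UniformlyTotallyBounded fun i ↦ X i t₀)
    (hnear : ∀ s, ∀ L : ℝ≥0, 1 < L →
      ∀ᶠ t in 𝓝 s, ∀ i, BilipschitzEquivalent L (X i s) (X i t)) :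
    ∃ φ : ℕ → ℕ, StrictMono φ ∧ ∃ q : C(K, GHSpace),
      TendstoLocallyUniformly (fun k t ↦ toGHSpace (X (φ k) t)) q atTop := by
  have hbdd (t : K) : UniformlyTotallyBounded fun i ↦ X i t := by
    obtain ⟨L, hL⟩ :=
      exists_forall_bilipschitzEquivalent (fun s ↦ ⟨2, hnear s 2 one_lt_two⟩) t₀ t
    choose e he _ using hL
    exact hinit.of_surjective_of_lipschitzWith (fun i ↦ (e i).surjective) he
  have hequi : Equicontinuous fun i t ↦ toGHSpace (X i t) := fun t ↦
    equicontinuousAt_toGHSpace (hbdd t).exists_ediam_le.choose_spec (hnear t)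
  exact exists_subseq_tendstoLocallyUniformly_of_equicontinuous hequi fun t ↦
    (hbdd t).totallyBounded_range_toGHSpace

/-- The member at time `t` of a one-parameter family `d` of metrics on a set `X`. A separate name
for the set at each time lets instance search find the metric `d t`. -/
def TimeSlice.{u, v} {X : Type u} {K : Type v} (_d : K → MetricSpace X) (_t : K) : Type u := X

instance {X K : Type*} (d : K → MetricSpace X) (t : K) : MetricSpace (TimeSlice d t) := d t

/-- Glickenstein-type compactness: a sequence of one-parameter families of compact metric
spaces with uniformly bounded diameters, uniform total boundedness at time `0`, and
uniform `(1+δ)`-equicontinuity in the time variable, subconverges in the pointwise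
Gromov–Hausdorff sense to a one-parameter family of nonempty compact metric spaces. -/
theorem glickenstein_compactness
    (T D : ℝ) (hT : 0 < T) (hD : 0 < D)
    (X : ℕ → Type) (hn : ∀ i, Nonempty (X i))
    (d : ∀ i, ℝ → MetricSpace (X i))
    (hc : ∀ i, ∀ t ∈ Set.Icc (0 : ℝ) T,
      @CompactSpace (X i) ((d i t).toPseudoMetricSpace.toUniformSpace.toTopologicalSpace))
    (hdiam : ∀ i, ∀ t ∈ Set.Icc (0 : ℝ) T,
      @Metric.diam (X i) (d i t).toPseudoMetricSpace Set.univ ≤ D)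
    (hcover : ∀ ε : ℝ, 0 < ε → ∃ N : ℕ, ∀ i, ∃ s : Finset (X i), s.card ≤ N ∧
      (Set.univ : Set (X i)) ⊆ ⋃ x ∈ s, @Metric.closedBall (X i) (d i 0).toPseudoMetricSpace x ε)
    (hequiv : ∀ δ : ℝ, 0 < δ → ∃ η : ℝ, 0 < η ∧
      ∀ t₀ ∈ Set.Icc (0 : ℝ) T, ∀ t₁ ∈ Set.Icc (0 : ℝ) T, |t₀ - t₁| < η → ∀ i, ∀ x y : X i,
        (1 + δ)⁻¹ * @dist (X i) (d i t₀).toPseudoMetricSpace.toDist x y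
            ≤ @dist (X i) (d i t₁).toPseudoMetricSpace.toDist x y ∧
        @dist (X i) (d i t₁).toPseudoMetricSpace.toDist x y
            ≤ (1 + δ) * @dist (X i) (d i t₀).toPseudoMetricSpace.toDist x y) :
    ∃ ik : ℕ → ℕ, StrictMono ik ∧
      ∃ (Y : ℝ → Type) (ρ : ∀ t, MetricSpace (Y t))
        (hnY : ∀ t, Nonempty (Y t))
        (hcY : ∀ t, @CompactSpace (Y t)
          ((ρ t).toPseudoMetricSpace.toUniformSpace.toTopologicalSpace)),
        ∀ t, ∀ ht : t ∈ Set.Icc (0 : ℝ) T,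
          Filter.Tendsto
            (fun k => dist (ghPt (X (ik k)) (d (ik k) t) (hc (ik k) t ht) (hn (ik k)))
              (ghPt (Y t) (ρ t) (hcY t) (hnY t)))
            Filter.atTop (nhds 0) := by
  have (i : ℕ) (t : Icc 0 T) : CompactSpace (TimeSlice (d i) t) := hc i t t.2
  have (i : ℕ) (t : Icc 0 T) : Nonempty (TimeSlice (d i) t) := hn i
  have : PreconnectedSpace (Icc 0 T) := Subtype.preconnectedSpace isPreconnected_Icc
  let t₀ : Icc 0 T := ⟨0, left_mem_Icc.2 hT.le⟩
  have hinit : UniformlyTotallyBounded fun i ↦ TimeSlice (d i) (t₀ : ℝ) :=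
    .of_diam_le_of_closedBall (fun i ↦ hdiam i 0 t₀.2) hcover
  have hnear (s : Icc 0 T) (L : ℝ≥0) (hL : 1 < L) : ∀ᶠ t : Icc 0 T in 𝓝 s, ∀ i,
      BilipschitzEquivalent L (TimeSlice (d i) (s : ℝ)) (TimeSlice (d i) (t : ℝ)) := by
    obtain ⟨η, hη, h⟩ := hequiv (L - 1) (sub_pos.2 hL)
    simp only [add_sub_cancel] at h
    filter_upwards [ball_mem_nhds s hη] with t hts i
    exact ⟨.refl (X i), .of_dist_le_mul fun x y ↦ (h s s.2 t t.2 (mem_ball'.1 hts) i x y).2,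
      .of_le_mul_dist fun x y ↦ (h t t.2 s s.2 hts i x y).2⟩
  obtain ⟨ik, hik, q, hq⟩ := glickenstein_compactness_general t₀ hinit hnear
  refine ⟨ik, hik, fun t ↦ (q (projIcc 0 T hT.le t)).Rep, fun _ ↦ inferInstance,
    fun _ ↦ inferInstance, fun _ ↦ inferInstance, fun t ht ↦ ?_⟩
  rw [ghPt, GHSpace.toGHSpace_rep, projIcc_of_mem hT.le ht]
  have hlim := (hq.tendstoLocallyUniformlyOn (s := univ)).tendsto_at (mem_univ (⟨t, ht⟩ : Icc 0 T))
  exact tendsto_iff_dist_tendsto_zero.1 hlim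
end

section
/- Let L ≥ 1. For each i ∈ ℕ, let X_i be a nonempty set carrying two metrics d_i and d_i', each making X_i a compact metric space, and assume L^{-1} d_i(x,y) ≤ d_i'(x,y) ≤ L d_i(x,y) for all i and all x,y ∈ X_i. Suppose (X_i, d_i) converges in the Gromov–Hausdorff distance to a nonempty compact metric space (Y, ρ) and (X_i, d_i') converges in the Gromov–Hausdorff distance to a nonempty compact metric space (Y', ρ'). Then there exists a bijection F : Y → Y' satisfying L^{-1} ρ(x,y) ≤ ρ'(F(x), F(y)) ≤ L ρ(x,y) for all x,y ∈ Y; in particular, Y and Y' are homeomorphic. -/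
/-!
Say that points `x i : X i` converge to `y : Y` if the distance from `x i` to `y` inside the optimal
coupling of `X i` and `Y` tends to `0`. When `X i → Y`, every point of `Y` is the limit of such a
family, distances pass to the limit and, as `Y` is compact, every family of points has a limit along
a fixed ultrafilter. Hence uniformly Lipschitz maps `X i → X' i` send families with a common limit
to families with a common limit, and so induce a Lipschitz map between the limit spaces. This
construction respects composition, so uniformly Lipschitz bijections `X i ≃ X' i` with uniformly
Lipschitz inverses induce mutually inverse Lipschitz maps.
-/

open Filter GromovHausdorff Metric Set Topology
open scoped NNReal

lemma exists_mem_dist_le_hausdorffDist_of_isCompact {α : Type*} [PseudoMetricSpace α] {s t : Set α}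
    (hs : Bornology.IsBounded s) (ht : IsCompact t) (htn : t.Nonempty) {a : α} (ha : a ∈ s) :
    ∃ b ∈ t, dist a b ≤ hausdorffDist s t := by
  obtain ⟨b, hb, hab⟩ := ht.exists_infDist_eq_dist htn a
  exact ⟨b, hb, hab ▸ infDist_le_hausdorffDist_of_mem ha
    (hausdorffEDist_ne_top_of_nonempty_of_bounded ⟨a, ha⟩ htn hs ht.isBounded)⟩

section OptimalCoupling

variable {X Y : Type*} [MetricSpace X] [CompactSpace X] [Nonempty X]
  [MetricSpace Y] [CompactSpace Y] [Nonempty Y]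

lemma exists_dist_optimalGHInjr_le_ghDist (x : X) :
    ∃ y : Y, dist (optimalGHInjl X Y x) (optimalGHInjr X Y y) ≤ ghDist X Y := by
  have hl := isCompact_range (isometry_optimalGHInjl X Y).continuous
  have hr := isCompact_range (isometry_optimalGHInjr X Y).continuous
  obtain ⟨_, ⟨y, rfl⟩, hy⟩ := exists_mem_dist_le_hausdorffDist_of_isCompact hl.isBounded hr
    (range_nonempty _) (mem_range_self x)
  exact ⟨y, hy.trans_eq hausdorffDist_optimal⟩

lemma exists_dist_optimalGHInjl_le_ghDist (y : Y) :
    ∃ x : X, dist (optimalGHInjl X Y x) (optimalGHInjr X Y y) ≤ ghDist X Y := by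
  have hl := isCompact_range (isometry_optimalGHInjl X Y).continuous
  have hr := isCompact_range (isometry_optimalGHInjr X Y).continuous
  obtain ⟨_, ⟨x, rfl⟩, hx⟩ := exists_mem_dist_le_hausdorffDist_of_isCompact hr.isBounded hl
    (range_nonempty _) (mem_range_self y)
  rw [dist_comm, hausdorffDist_comm, hausdorffDist_optimal] at hx
  exact ⟨x, hx⟩

end OptimalCoupling

section TendstoGH

variable {ι : Type*} {l : Filter ι} {X : ι → Type*} {Y : Type*}
  [∀ i, MetricSpace (X i)] [∀ i, CompactSpace (X i)] [∀ i, Nonempty (X i)]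
  [MetricSpace Y] [CompactSpace Y] [Nonempty Y]

/-- Convergence along `l` of points `x i` of the varying spaces `X i` to a point `y` of `Y`,
measured in the optimal Gromov–Hausdorff couplings of `X i` and `Y`. Convergence of the spaces `X i`
to `Y` is not part of the definition. -/
def TendstoGH (l : Filter ι) (x : ∀ i, X i) (y : Y) : Prop :=
  Tendsto (fun i ↦ dist (optimalGHInjl (X i) Y (x i)) (optimalGHInjr (X i) Y y)) l (𝓝 0)

namespace TendstoGH

variable {x x' : ∀ i, X i} {y y' : Y}

lemma tendsto_dist (h : TendstoGH l x y) (h' : TendstoGH l x' y') :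
    Tendsto (fun i ↦ dist (x i) (x' i)) l (𝓝 (dist y y')) := by
  refine tendsto_iff_dist_tendsto_zero.2 <|
    squeeze_zero (fun _ ↦ dist_nonneg) (fun i ↦ ?_) (by simpa only [add_zero] using h.add h')
  rw [← (isometry_optimalGHInjl (X i) Y).dist_eq, ← (isometry_optimalGHInjr (X i) Y).dist_eq]
  exact dist_dist_dist_le _ _ _ _

lemma unique [l.NeBot] (h : TendstoGH l x y) (h' : TendstoGH l x y') : y = y' := by
  have hdist := h.tendsto_dist h'
  simp only [dist_self] at hdist
  exact dist_eq_zero.1 (tendsto_nhds_unique tendsto_const_nhds hdist).symm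

lemma congr_dist (h : TendstoGH l x y) (hx : Tendsto (fun i ↦ dist (x' i) (x i)) l (𝓝 0)) :
    TendstoGH l x' y := by
  refine squeeze_zero (fun _ ↦ dist_nonneg) (fun i ↦ ?_) (by simpa only [add_zero] using hx.add h)
  rw [← (isometry_optimalGHInjl (X i) Y).dist_eq]
  exact dist_triangle _ _ _

end TendstoGH

lemma exists_tendstoGH_left (h : Tendsto (fun i ↦ ghDist (X i) Y) l (𝓝 0)) (y : Y) :
    ∃ x : ∀ i, X i, TendstoGH l x y := by
  choose x hx using fun i ↦ exists_dist_optimalGHInjl_le_ghDist (X := X i) y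
  exact ⟨x, squeeze_zero (fun _ ↦ dist_nonneg) hx h⟩

lemma exists_tendstoGH_right {U : Ultrafilter ι}
    (h : Tendsto (fun i ↦ ghDist (X i) Y) U (𝓝 0)) (x : ∀ i, X i) : ∃ y : Y, TendstoGH U x y := by
  choose z hz using fun i ↦ exists_dist_optimalGHInjr_le_ghDist (Y := Y) (x i)
  have hlim : Tendsto z U (𝓝 (U.map z).lim) := (U.map z).le_nhds_lim
  refine ⟨(U.map z).lim, squeeze_zero (fun _ ↦ dist_nonneg) (fun i ↦ ?_)
    (by simpa only [add_zero] using h.add (tendsto_iff_dist_tendsto_zero.1 hlim))⟩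
  rw [← (isometry_optimalGHInjr (X i) Y).dist_eq]
  exact (dist_triangle _ _ _).trans (add_le_add_left (hz i) _)

end TendstoGH

lemma lipschitzWith_and_symm_iff_dist {α β : Type*} [PseudoMetricSpace α] [PseudoMetricSpace β]
    {e : α ≃ β} {c C : ℝ} (hc : 0 < c) (hC : 0 ≤ C) :
    (LipschitzWith C.toNNReal e ∧ LipschitzWith c⁻¹.toNNReal e.symm) ↔
      ∀ x y, c * dist x y ≤ dist (e x) (e y) ∧ dist (e x) (e y) ≤ C * dist x y := by
  simp only [lipschitzWith_iff_dist_le_mul, Real.coe_toNNReal C hC,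
    Real.coe_toNNReal c⁻¹ (inv_nonneg.2 hc.le), le_inv_mul_iff₀ hc]
  refine ⟨fun ⟨h, h'⟩ x y ↦ ⟨?_, h x y⟩, fun h ↦ ⟨fun x y ↦ (h x y).2, fun x y ↦ ?_⟩⟩
  · simpa only [e.symm_apply_apply] using h' (e x) (e y)
  · simpa only [e.apply_symm_apply] using (h (e.symm x) (e.symm y)).1

section Lipschitz

variable {ι : Type*} {X X' : ι → Type*} {Y Y' : Type*}
  [∀ i, MetricSpace (X i)] [∀ i, CompactSpace (X i)] [∀ i, Nonempty (X i)]
  [∀ i, MetricSpace (X' i)] [∀ i, CompactSpace (X' i)] [∀ i, Nonempty (X' i)]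
  [MetricSpace Y] [CompactSpace Y] [Nonempty Y] [MetricSpace Y'] [CompactSpace Y'] [Nonempty Y']

lemma exists_lipschitzWith_tendstoGH_map {U : Ultrafilter ι}
    (hX : Tendsto (fun i ↦ ghDist (X i) Y) U (𝓝 0))
    (hX' : Tendsto (fun i ↦ ghDist (X' i) Y') U (𝓝 0))
    {K : ℝ≥0} {f : ∀ i, X i → X' i} (hf : ∀ i, LipschitzWith K (f i)) :
    ∃ F : Y → Y', LipschitzWith K F ∧
      ∀ x y, TendstoGH U x y → TendstoGH U (fun i ↦ f i (x i)) (F y) := by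
  choose s hs using exists_tendstoGH_left hX
  choose F hF using fun y ↦ exists_tendstoGH_right hX' fun i ↦ f i (s y i)
  refine ⟨F, LipschitzWith.of_dist_le_mul fun y z ↦ ?_, fun x y hx ↦ (hF y).congr_dist ?_⟩
  · exact le_of_tendsto_of_tendsto' ((hF y).tendsto_dist (hF z))
      (((hs y).tendsto_dist (hs z)).const_mul (K : ℝ)) fun i ↦ (hf i).dist_le_mul _ _
  · have hdist : Tendsto (fun i ↦ K * dist (x i) (s y i)) U (𝓝 0) := by
      simpa only [dist_self, mul_zero] using (hx.tendsto_dist (hs y)).const_mul (K : ℝ)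
    exact squeeze_zero (fun _ ↦ dist_nonneg) (fun i ↦ (hf i).dist_le_mul _ _) hdist

lemma leftInverse_of_tendstoGH_map {l : Filter ι} [l.NeBot]
    (hX : Tendsto (fun i ↦ ghDist (X i) Y) l (𝓝 0)) {f : ∀ i, X i → X' i} {g : ∀ i, X' i → X i}
    (hgf : ∀ i, Function.LeftInverse (g i) (f i)) {F : Y → Y'} {G : Y' → Y}
    (hF : ∀ x y, TendstoGH l x y → TendstoGH l (fun i ↦ f i (x i)) (F y))
    (hG : ∀ x y, TendstoGH l x y → TendstoGH l (fun i ↦ g i (x i)) (G y)) :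
    Function.LeftInverse G F := fun y ↦ by
  obtain ⟨x, hx⟩ := exists_tendstoGH_left hX y
  have hGFx := hG _ _ (hF _ _ hx)
  simp only [hgf _ _] at hGFx
  exact hGFx.unique hx

variable {l : Filter ι} [l.NeBot] {e : ∀ i, X i ≃ X' i}

lemma exists_homeomorph_lipschitzWith_of_tendsto_ghDist
    (hX : Tendsto (fun i ↦ ghDist (X i) Y) l (𝓝 0))
    (hX' : Tendsto (fun i ↦ ghDist (X' i) Y') l (𝓝 0)) {K K' : ℝ≥0}
    (he : ∀ i, LipschitzWith K (e i)) (he' : ∀ i, LipschitzWith K' (e i).symm) :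
    ∃ F : Y ≃ₜ Y', LipschitzWith K F ∧ LipschitzWith K' F.symm := by
  have hXU := hX.mono_left (Ultrafilter.of_le l)
  have hXU' := hX'.mono_left (Ultrafilter.of_le l)
  obtain ⟨F, hF, hFlim⟩ := exists_lipschitzWith_tendstoGH_map hXU hXU' he
  obtain ⟨G, hG, hGlim⟩ := exists_lipschitzWith_tendstoGH_map hXU' hXU he'
  have hGF := leftInverse_of_tendstoGH_map hXU (fun i ↦ (e i).left_inv) hFlim hGlim
  have hFG := leftInverse_of_tendstoGH_map hXU' (fun i ↦ (e i).right_inv) hGlim hFlim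
  exact ⟨⟨⟨F, G, hGF, hFG⟩, hF.continuous, hG.continuous⟩, hF, hG⟩

theorem gh_limits_of_biLipschitz_equivalent_metrics_general {c C : ℝ} (hc : 0 < c) (hC : 0 ≤ C)
    (he : ∀ i x y, c * dist x y ≤ dist (e i x) (e i y) ∧ dist (e i x) (e i y) ≤ C * dist x y)
    (hX : Tendsto (fun i ↦ ghDist (X i) Y) l (𝓝 0))
    (hX' : Tendsto (fun i ↦ ghDist (X' i) Y') l (𝓝 0)) :
    ∃ F : Y ≃ₜ Y', ∀ x y, c * dist x y ≤ dist (F x) (F y) ∧ dist (F x) (F y) ≤ C * dist x y := by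
  have hlip (i : ι) := (lipschitzWith_and_symm_iff_dist hc hC).2 (he i)
  obtain ⟨F, hF⟩ := exists_homeomorph_lipschitzWith_of_tendsto_ghDist hX hX'
    (fun i ↦ (hlip i).1) fun i ↦ (hlip i).2
  exact ⟨F, (lipschitzWith_and_symm_iff_dist (e := F.toEquiv) hc hC).1 hF⟩

end Lipschitz

/-- If `(X_i, d_i) → (Y, ρ)` and `(X_i, d_i') → (Y', ρ')` in Gromov–Hausdorff distance,
where `d_i` and `d_i'` are uniformly `L`-bi-Lipschitz-equivalent metrics on the same sets,
then there is a bijection `Y → Y'` which is `L`-bi-Lipschitz; in particular `Y` and `Y'`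
are homeomorphic. -/
theorem gh_limits_of_biLipschitz_equivalent_metrics
    (L : ℝ) (hL : 1 ≤ L)
    (X : ℕ → Type) (hn : ∀ i, Nonempty (X i))
    (d d' : ∀ i, MetricSpace (X i))
    (hc : ∀ i, @CompactSpace (X i)
      ((d i).toPseudoMetricSpace.toUniformSpace.toTopologicalSpace))
    (hc' : ∀ i, @CompactSpace (X i)
      ((d' i).toPseudoMetricSpace.toUniformSpace.toTopologicalSpace))
    (hbil : ∀ i, ∀ x y : X i,
      L⁻¹ * @dist (X i) (d i).toPseudoMetricSpace.toDist x y
          ≤ @dist (X i) (d' i).toPseudoMetricSpace.toDist x y ∧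
      @dist (X i) (d' i).toPseudoMetricSpace.toDist x y
          ≤ L * @dist (X i) (d i).toPseudoMetricSpace.toDist x y)
    (Y Y' : Type) (hnY : Nonempty Y) (hnY' : Nonempty Y')
    (ρ : MetricSpace Y) (ρ' : MetricSpace Y')
    (hcY : @CompactSpace Y (ρ.toPseudoMetricSpace.toUniformSpace.toTopologicalSpace))
    (hcY' : @CompactSpace Y' (ρ'.toPseudoMetricSpace.toUniformSpace.toTopologicalSpace))
    (hconv : Filter.Tendsto
      (fun i => dist (ghPt (X i) (d i) (hc i) (hn i)) (ghPt Y ρ hcY hnY))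
      Filter.atTop (nhds 0))
    (hconv' : Filter.Tendsto
      (fun i => dist (ghPt (X i) (d' i) (hc' i) (hn i)) (ghPt Y' ρ' hcY' hnY'))
      Filter.atTop (nhds 0)) :
    (∃ F : Y → Y', Function.Bijective F ∧ ∀ x y : Y,
      L⁻¹ * @dist Y ρ.toPseudoMetricSpace.toDist x y
          ≤ @dist Y' ρ'.toPseudoMetricSpace.toDist (F x) (F y) ∧
      @dist Y' ρ'.toPseudoMetricSpace.toDist (F x) (F y)
          ≤ L * @dist Y ρ.toPseudoMetricSpace.toDist x y) ∧
    Nonempty (@Homeomorph Y Y' ρ.toPseudoMetricSpace.toUniformSpace.toTopologicalSpace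
      ρ'.toPseudoMetricSpace.toUniformSpace.toTopologicalSpace) := by
  have hL0 : 0 < L := one_pos.trans_le hL
  obtain ⟨F, hF⟩ := @gh_limits_of_biLipschitz_equivalent_metrics_general ℕ X X Y Y' d hc hn d' hc'
    hn ρ hcY hnY ρ' hcY' hnY' atTop _ (fun _ ↦ Equiv.refl _) L⁻¹ L (inv_pos.2 hL0) hL0.le hbil
    hconv hconv'
  exact ⟨⟨F, F.bijective, hF⟩, ⟨F⟩⟩
end

section
/- Let T > 0 and D > 0. For each i ∈ ℕ, let X_i be a nonempty set and for each t ∈ [0,T] let d_i(t) be a metric on X_i making (X_i, d_i(t)) a compact metric space. Assume: (a) diam(X_i, d_i(t)) ≤ D for all i and all t ∈ [0,T]; (b) for every ε > 0 there exists N(ε) ∈ ℕ such that every (X_i, d_i(0)) can be covered by N(ε) closed balls of radius ε; (c) for every δ > 0 there exists η > 0 such that whenever t₀, t₁ ∈ [0,T] satisfy |t₀ − t₁| < η, one has (1+δ)^{-1} d_i(t₀)(x,y) ≤ d_i(t₁)(x,y) ≤ (1+δ) d_i(t₀)(x,y) for all i and all x,y ∈ X_i. Then the set of isometry classes {(X_i,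 d_i(t)) : i ∈ ℕ, t ∈ [0,T]} has compact closure in the Gromov–Hausdorff space of isometry classes of nonempty compact metric spaces. -/
open GromovHausdorff Metric Set
open scoped NNReal

universe u

/-- The type `X` carrying the metric `m` as an instance. It allows several metrics on one type to be
used side by side. -/
def WithMetric {X : Type u} (_m : MetricSpace X) : Type u := X

instance {X : Type u} (m : MetricSpace X) : MetricSpace (WithMetric m) := m

instance {X : Type u} (m : MetricSpace X) [hX : Nonempty X] : Nonempty (WithMetric m) := hX

/-- The identity map of `X`, from the metric `m` to the metric `m'`, whose Lipschitz constants
compare the two. Writing `id` instead would elaborate with the metric `m` on both sides. -/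
def WithMetric.recast {X : Type u} (m m' : MetricSpace X) (x : WithMetric m) : WithMetric m' := x

theorem WithMetric.recast_surjective {X : Type u} (m m' : MetricSpace X) :
    (recast m m').Surjective :=
  Function.surjective_id

/-- A family of spaces is uniformly totally bounded if for each radius `ε > 0` its members are
covered by closed balls of radius `ε` whose number is bounded independently of the member. This is
the covering condition in Gromov's precompactness criterion. -/
def UniformlyTotallyBounded_s6 {ι : Type*} (X : ι → Type*) [∀ i, PseudoEMetricSpace (X i)] : Prop :=
  ∀ ε : ℝ≥0, 0 < ε → ∃ N : ℕ, ∀ i, ∃ s : Finset (X i), s.card ≤ N ∧ IsCover ε univ (s : Set (X i))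

theorem UniformlyTotallyBounded_s6.of_lipschitzWith_surjective {ι κ : Type*} {X : ι → Type*}
    {Y : κ → Type*} [∀ i, PseudoEMetricSpace (X i)] [∀ j, PseudoEMetricSpace (Y j)]
    (hX : UniformlyTotallyBounded_s6 X) {K : ℝ≥0} {φ : κ → ι} {f : ∀ j, X (φ j) → Y j}
    (hf : ∀ j, LipschitzWith K (f j)) (hsurj : ∀ j, (f j).Surjective) :
    UniformlyTotallyBounded_s6 Y := by
  classical
  intro ε hε
  -- The `1` in the denominator covers the case `K = 0`.
  obtain ⟨N, hN⟩ := hX (ε / (K + 1)) (by positivity)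
  refine ⟨N, fun j => ?_⟩
  obtain ⟨s, hcard, hs⟩ := hN (φ j)
  have hradius : K * (ε / (K + 1)) ≤ ε := by
    rw [mul_div_left_comm]
    exact mul_le_of_le_one_right' (div_le_one_of_le₀ le_self_add (by positivity))
  refine ⟨s.image (f j), Finset.card_image_le.trans hcard, ?_⟩
  rw [Finset.coe_image]
  exact (hs.image_lipschitz_of_surjective (hf j) (hsurj j)).mono_radius hradius

theorem isCompact_closure_range_toGHSpace {ι : Type*} {X : ι → Type u} [∀ i, MetricSpace (X i)]
    [∀ i, CompactSpace (X i)] [∀ i, Nonempty (X i)] {D : ℝ}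
    (hdiam : ∀ i, diam (univ : Set (X i)) ≤ D) (hX : UniformlyTotallyBounded_s6 X) :
    IsCompact (closure (range fun i => toGHSpace (X i))) := by
  have e (i : ι) : X i ≃ᵢ (toGHSpace (X i)).Rep :=
    (toGHSpace_eq_toGHSpace_iff_isometryEquiv.1 (toGHSpace (X i)).toGHSpace_rep.symm).some
  have hRep : UniformlyTotallyBounded_s6 fun i => (toGHSpace (X i)).Rep :=
    hX.of_lipschitzWith_surjective (φ := id) (fun i => (e i).isometry.lipschitz)
      fun i => (e i).surjective
  -- Halving the radius turns closed balls into open ones.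
  choose N hN using fun n : ℕ => hRep (1 / (n + 1) / 2) (by positivity)
  refine TotallyBounded.isCompact_of_isClosed (TotallyBounded.closure ?_) isClosed_closure
  refine GromovHausdorff.totallyBounded (C := D) (K := N)
    tendsto_one_div_add_atTop_nhds_zero_nat ?_ ?_
  · rintro _ ⟨i, rfl⟩
    exact (e i).diam_univ.symm.trans_le (hdiam i)
  · rintro _ ⟨i, rfl⟩ n
    obtain ⟨s, hcard, hs⟩ := hN n i
    refine ⟨s, by simpa using hcard, hs.subset_iUnion_closedBall.trans ?_⟩
    refine iUnion₂_mono fun x _ => closedBall_subset_ball ?_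
    push_cast
    exact half_lt_self (by positivity)

section TimeDependentMetric

variable {E : Type*} [SeminormedAddCommGroup E] [NormedSpace ℝ E] {S : Set E}

theorem exists_mem_dist_lt_dist_lt_of_convex (hS : Convex ℝ S) {s t : E} (hs : s ∈ S) (ht : t ∈ S)
    {a b : ℝ} (ha : 0 < a) (hb : 0 < b) (h : dist s t < a + b) :
    ∃ u ∈ S, dist s u < a ∧ dist u t < b := by
  have hab : 0 < a + b := by positivity
  refine ⟨AffineMap.lineMap s t (a / (a + b)), hS.lineMap_mem hs ht ⟨by positivity, ?_⟩, ?_, ?_⟩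
  · exact div_le_one_of_le₀ (by linarith) hab.le
  · rw [dist_left_lineMap, Real.norm_of_nonneg (by positivity), div_mul_eq_mul_div,
      div_lt_iff₀ hab]
    gcongr
  · rw [dist_lineMap_right, one_sub_div hab.ne', add_sub_cancel_left,
      Real.norm_of_nonneg (by positivity), div_mul_eq_mul_div, div_lt_iff₀ hab]
    gcongr

theorem WithMetric.lipschitzWith_pow_recast {X : Type*} (hS : Convex ℝ S) {d : S → MetricSpace X}
    {K : ℝ≥0} {η : ℝ} (hη : 0 < η)
    (hlip : ∀ s t, dist s t < η → LipschitzWith K (WithMetric.recast (d s) (d t)))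
    (n : ℕ) {s t : S} (hst : dist s t < n * η) :
    LipschitzWith (K ^ n) (WithMetric.recast (d s) (d t)) := by
  induction n generalizing t with
  | zero => exact absurd hst (by simp)
  | succ n ih =>
    rcases n.eq_zero_or_pos with rfl | hn
    · simpa using hlip s t (by simpa using hst)
    · have hst' : dist (s : E) t < n * η + η := by
        rw [← Subtype.dist_eq]
        push_cast at hst
        linarith
      obtain ⟨u, hu, hsu, hut⟩ :=
        exists_mem_dist_lt_dist_lt_of_convex hS s.2 t.2 (by positivity) hη hst'
      rw [pow_succ']
      exact (hlip ⟨u, hu⟩ t hut).comp (ih (t := ⟨u, hu⟩) hsu)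

theorem family_precompact_in_GHSpace_general {ι : Type*} {X : ι → Type u} [∀ i, Nonempty (X i)]
    (hS : Convex ℝ S) (hS_bdd : Bornology.IsBounded S) (t₀ : S) {d : ∀ i, S → MetricSpace (X i)}
    [∀ i t, CompactSpace (WithMetric (d i t))] {D : ℝ}
    (hdiam : ∀ i, diam (univ : Set (WithMetric (d i t₀))) ≤ D)
    (hcover : UniformlyTotallyBounded_s6 fun i => WithMetric (d i t₀))
    {K : ℝ≥0} {η : ℝ} (hη : 0 < η)
    (hlip : ∀ i s t, dist s t < η → LipschitzWith K (WithMetric.recast (d i s) (d i t))) :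
    IsCompact (closure (range fun p : ι × S => toGHSpace (WithMetric (d p.1 p.2)))) := by
  obtain ⟨n, hn⟩ := exists_lt_nsmul hη (diam S)
  have hlip₀ (p : ι × S) : LipschitzWith (K ^ n) (WithMetric.recast (d p.1 t₀) (d p.1 p.2)) :=
    WithMetric.lipschitzWith_pow_recast hS hη (hlip p.1) n <|
      (dist_le_diam_of_mem hS_bdd t₀.2 p.2.2).trans_lt (by simpa using hn)
  refine isCompact_closure_range_toGHSpace (D := K ^ n * D) (fun p => ?_)
    (hcover.of_lipschitzWith_surjective (φ := Prod.fst) hlip₀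
      fun _ => WithMetric.recast_surjective _ _)
  calc diam (univ : Set (WithMetric (d p.1 p.2)))
      ≤ K ^ n * diam (univ : Set (WithMetric (d p.1 t₀))) := by
        simpa [(WithMetric.recast_surjective _ _).range_eq] using
          (hlip₀ p).diam_image_le univ isBounded_of_compactSpace
    _ ≤ K ^ n * D := by gcongr; exact hdiam p.1

end TimeDependentMetric

/-- Precompactness of a two-parameter family: a sequence of one-parameter families of compact
metric spaces with uniformly bounded diameters, uniform total boundedness at time `0`, and
uniform `(1+δ)`-equicontinuity in the time variable, has compact closure in the
Gromov–Hausdorff space. -/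
theorem family_precompact_in_GHSpace
    (T D : ℝ) (hT : 0 < T) (hD : 0 < D)
    (X : ℕ → Type) (hn : ∀ i, Nonempty (X i))
    (d : ∀ i, ℝ → MetricSpace (X i))
    (hc : ∀ i, ∀ t ∈ Set.Icc (0 : ℝ) T,
      @CompactSpace (X i) ((d i t).toPseudoMetricSpace.toUniformSpace.toTopologicalSpace))
    (hdiam : ∀ i, ∀ t ∈ Set.Icc (0 : ℝ) T,
      @Metric.diam (X i) (d i t).toPseudoMetricSpace Set.univ ≤ D)
    (hcover : ∀ ε : ℝ, 0 < ε → ∃ N : ℕ, ∀ i, ∃ s : Finset (X i), s.card ≤ N ∧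
      (Set.univ : Set (X i)) ⊆ ⋃ x ∈ s, @Metric.closedBall (X i) (d i 0).toPseudoMetricSpace x ε)
    (hequiv : ∀ δ : ℝ, 0 < δ → ∃ η : ℝ, 0 < η ∧
      ∀ t₀ ∈ Set.Icc (0 : ℝ) T, ∀ t₁ ∈ Set.Icc (0 : ℝ) T, |t₀ - t₁| < η → ∀ i, ∀ x y : X i,
        (1 + δ)⁻¹ * @dist (X i) (d i t₀).toPseudoMetricSpace.toDist x y
            ≤ @dist (X i) (d i t₁).toPseudoMetricSpace.toDist x y ∧
        @dist (X i) (d i t₁).toPseudoMetricSpace.toDist x y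
            ≤ (1 + δ) * @dist (X i) (d i t₀).toPseudoMetricSpace.toDist x y) :
    IsCompact (closure
      {p : GromovHausdorff.GHSpace | ∃ i, ∃ t, ∃ ht : t ∈ Set.Icc (0 : ℝ) T,
        p = ghPt (X i) (d i t) (hc i t ht) (hn i)}) := by
  obtain ⟨η, hη, hstep⟩ := hequiv 1 one_pos
  have (i) (t : Icc 0 T) : CompactSpace (WithMetric (d i t)) := hc i t t.2
  have h0 : (0 : ℝ) ∈ Icc 0 T := left_mem_Icc.2 hT.le
  have hcover₀ : UniformlyTotallyBounded_s6 fun i => WithMetric (d i 0) := fun ε hε =>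
    (hcover ε hε).imp fun _ hN i => (hN i).imp fun _ hs =>
      ⟨hs.1, isCover_iff_subset_iUnion_closedBall.2 hs.2⟩
  have hlip (i) (s t : Icc 0 T) (hst : dist s t < η) :
      LipschitzWith (1 + 1) (WithMetric.recast (d i s) (d i t)) :=
    .of_dist_le_mul fun x y => (hstep s s.2 t t.2 hst i x y).2
  convert family_precompact_in_GHSpace_general (convex_Icc 0 T) (isBounded_Icc 0 T) ⟨0, h0⟩
    (d := fun i t => d i t) (fun i => hdiam i 0 h0) hcover₀ hη hlip using 2
  ext p
  constructor
  · rintro ⟨i, t, ht, rfl⟩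
    exact ⟨(i, ⟨t, ht⟩), rfl⟩
  · rintro ⟨⟨i, t, ht⟩, rfl⟩
    exact ⟨i, t, ht, rfl⟩
end
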